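/- Let V = ℕ and k ≥ 2. There exists a single k-distinguisher g_k over V such that: for every (k−1)-distinguishing class G_{k−1} over V with finite graph VC dimension and every ε > 0, there exist probability distributions p₁, p₂ on V with IPM_{G_{k−1}}(p₁,p₂) < ε and |L_{p₁}(g_k) − L_{p₂}(g_k)| > 1/4. -/

import Mathlib

open scoped BigOperators

namespace GraphDisc

/-- A `k`-distinguisher is symmetric: invariant under all permutations of arguments. -/
def IsSymmetric {V : Type*} {k : ℕ} (g : (Fin k → V) → Bool) : Prop :=
  ∀ (σ : Equiv.Perm (Fin k)) (w : Fin k → V), g (w ∘ σ) = g w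

/-- A `k`-distinguishing class: a family of symmetric Boolean `k`-ary functions. -/
def IsDistinguishingClass {V : Type*} {k : ℕ} (G : Set ((Fin k → V) → Bool)) : Prop :=
  ∀ g ∈ G, IsSymmetric g

/-- `p` is a probability distribution on `V` (as a mass function). -/
def IsDist {V : Type*} (p : V → ℝ) : Prop := (∀ v, 0 ≤ p v) ∧ HasSum p 1

/-- `L_P(g)`: expected value of `g` on a `k`-tuple of i.i.d. samples from `p`. -/
noncomputable def LP {V : Type*} {k : ℕ} (p : V → ℝ) (g : (Fin k → V) → Bool) : ℝ :=
  ∑' w : Fin k → V, (∏ i, p (w i)) * (if g w then 1 else 0)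

/-- `L_S(g)`: empirical frequency of `g` on all `k`-tuples from the sample `S`. -/
noncomputable def LS {V : Type*} {k m : ℕ} (S : Fin m → V) (g : (Fin k → V) → Bool) : ℝ :=
  (∑ t : Fin k → Fin m, if g (S ∘ t) then (1 : ℝ) else 0) / (m : ℝ) ^ k

/-- Probability of an event `E` under an i.i.d. sample of size `m` from `p`. -/
noncomputable def Prob {V : Type*} (p : V → ℝ) {m : ℕ} (E : Set (Fin m → V)) : ℝ :=
  ∑' S : Fin m → V, E.indicator (fun S => ∏ i, p (S i)) S

/-- Probability of an event `E` under two independent i.i.d. samples of size `m`. -/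
noncomputable def Prob2 {V : Type*} (p₁ p₂ : V → ℝ) {m : ℕ}
    (E : Set ((Fin m → V) × (Fin m → V))) : ℝ :=
  ∑' S : (Fin m → V) × (Fin m → V),
    E.indicator (fun S => (∏ i, p₁ (S.1 i)) * ∏ i, p₂ (S.2 i)) S

/-- IPM distance induced by a class of `k`-ary distinguishers. -/
noncomputable def IPM {V : Type*} {k : ℕ} (G : Set ((Fin k → V) → Bool))
    (p₁ p₂ : V → ℝ) : ℝ :=
  ⨆ g ∈ G, |LP p₁ g - LP p₂ g|

/-- `L_P(d)` for a unary Boolean function `d`. -/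
noncomputable def LP1 {V : Type*} (p : V → ℝ) (d : V → Bool) : ℝ :=
  ∑' v : V, p v * (if d v then 1 else 0)

/-- IPM distance for a family of unary Boolean functions. -/
noncomputable def IPM1 {V : Type*} (D : Set (V → Bool)) (p₁ p₂ : V → ℝ) : ℝ :=
  ⨆ d ∈ D, |LP1 p₁ d - LP1 p₂ d|

/-- `L_P(g)` for a binary (curried) Boolean function `g`. -/
noncomputable def LP2 {V : Type*} (p : V → ℝ) (g : V → V → Bool) : ℝ :=
  ∑' w : V × V, (p w.1 * p w.2) * (if g w.1 w.2 then 1 else 0)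

/-- `D` shatters the finite set `T`: every Boolean pattern on `T` is realized in `D`. -/
def Shatters {X : Type*} (D : Set (X → Bool)) (T : Finset X) : Prop :=
  ∀ f : X → Bool, ∃ d ∈ D, ∀ x ∈ T, d x = f x

/-- The VC dimension of a family of Boolean functions. -/
noncomputable def vcDim {X : Type*} (D : Set (X → Bool)) : ℕ∞ :=
  ⨆ T ∈ {T : Finset X | Shatters D T}, (T.card : ℕ∞)

/-- Fixing the first argument of a `(k+1)`-ary function to `v`. -/
def proj {V : Type*} {k : ℕ} (v : V) (g : (Fin (k + 1) → V) → Bool) :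
    (Fin k → V) → Bool := fun u => g (Fin.cons v u)

/-- The graph VC dimension, defined inductively: for `k = 1` it is the usual VC
dimension; for `k > 1` it is the supremum over `v` of the graph VC dimension of the
projected class `G_v`. -/
noncomputable def gvcDim {V : Type*} : (k : ℕ) → Set ((Fin k → V) → Bool) → ℕ∞
  | 0, G => vcDim G
  | 1, G => vcDim G
  | (k + 2), G => ⨆ v : V, gvcDim (k + 1) (proj v '' G)

open Classical in
/-- Mixture `q·δ_v + (1−q)·p`. -/
noncomputable def mix {V : Type*} (q : ℝ) (v : V) (p : V → ℝ) : V → ℝ :=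
  fun u => q * (if u = v then 1 else 0) + (1 - q) * p u

/-- The class of majority-vote threshold functions over `m`-tuples from `D`. -/
noncomputable def thresholdClass {V : Type*} (D : Set (V → Bool)) (m : ℕ) :
    Set (V → Bool) :=
  {h | ∃ d : Fin m → (V → Bool), (∀ i, d i ∈ D) ∧
        h = fun v => decide ((0 : ℝ) ≤ ∑ i, (2 * (if d i v then (1 : ℝ) else 0) - 1))}

/-!
Let `d` bound the graph VC dimension of the smaller class. The hard vertex set consists of tuples
`(i, a, j, b)`: a position `i`, a letter `a`, an index `j` and a sign `b`. A word `y` and signs `s`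
split the vertices over `y` into two halves, those with `b = s j` and those with `b ≠ s j`; `p₁` and
`p₂` are the uniform distributions on these halves.

Fix all arguments but one. What remains of the class on the pairs `(j, b)` has VC dimension at most
`d`, hence polynomially many members by Sauer–Shelah, and by Chernoff's bound all but an
exponentially small fraction of the sign vectors split each of them almost evenly. For such signs
exchanging `p₁` for `p₂` one argument at a time changes expectations only slightly.

The distinguisher, however, must not depend on the class. Attach signs `σ c` to every Reed–Solomon
codeword `y c` of dimension `k`, and let the edges be the `k`-tuples over one codeword, in distinct
positions, that agree with its signs. Since `k` positions determine the codeword, the graph contains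
no tuple from the second half, and almost every tuple from the first half. One `σ` serves all
classes at once: a class enters only through its sets of bad signs, one for each fixing of
`k - 2` arguments, a position and a letter. There are `q ^ k` codewords for an alphabet of size
`q`, but only `O(q ^ (k - 1))` such fixings, so by counting some `σ` has, for each admissible family
of bad sets, a codeword whose signs avoid all of them.

Disjoint copies of these graphs for all `d` and all accuracies form the required distinguisher.
-/

open Finset Function

section Symmetric

variable {V : Type*} {k : ℕ}

open Classical in
lemma isSymmetric_decide {P : (Fin k → V) → Prop}
    (hP : ∀ (σ : Equiv.Perm (Fin k)) w, P w → P (w ∘ σ)) :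
    IsSymmetric fun w => decide (P w) := by
  intro σ w
  refine decide_eq_decide.2 ⟨fun h => ?_, hP σ w⟩
  simpa [comp_assoc] using hP σ⁻¹ _ h

lemma IsSymmetric.proj {g : (Fin (k + 1) → V) → Bool} (hg : IsSymmetric g) (v : V) :
    IsSymmetric (proj v g) := by
  intro σ w
  refine Eq.trans (congrArg g ?_) (hg (Equiv.Perm.decomposeFin.symm (0, σ)) (Fin.cons v w))
  ext i
  cases i using Fin.cases <;> simp

lemma IsSymmetric.cons_cons {g : (Fin (k + 2) → V) → Bool} (hg : IsSymmetric g) (a b : V)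
    (u : Fin k → V) : g (Fin.cons a (Fin.cons b u)) = g (Fin.cons b (Fin.cons a u)) := by
  rw [← hg (Equiv.swap 0 1)]
  congr 1
  ext i
  cases i using Fin.cases with
  | zero => simp
  | succ i =>
    cases i using Fin.cases with
    | zero => simp
    | succ i =>
      have h₁ : i.succ.succ ≠ 1 := by simp [Fin.ext_iff]
      simp [Equiv.swap_apply_of_ne_of_ne (Fin.succ_ne_zero _) h₁]

lemma IsDistinguishingClass.image_proj {G : Set ((Fin (k + 1) → V) → Bool)}
    (hG : IsDistinguishingClass G) (v : V) : IsDistinguishingClass (proj v '' G) := by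
  rintro _ ⟨g, hg, rfl⟩
  exact (hG g hg).proj v

end Symmetric

section Extend

variable {V W : Type*} {e : W → V} {k : ℕ}

lemma IsDist.extend (he : Injective e) {p : W → ℝ} (hp : IsDist p) :
    IsDist (Function.extend e p 0) := by
  refine ⟨fun v => ?_, (hasSum_extend_zero he).2 hp.2⟩
  by_cases hv : ∃ w, e w = v
  · obtain ⟨w, rfl⟩ := hv
    exact (hp.1 w).trans_eq (he.extend_apply ..).symm
  · exact (extend_apply' p (0 : V → ℝ) v hv).ge

lemma LP_extend (he : Injective e) (p : W → ℝ) (g : (Fin k → V) → Bool) :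
    LP (Function.extend e p 0) g = LP p fun w => g (e ∘ w) := by
  have hsupp : support (fun w : Fin k → V =>
      (∏ i, Function.extend e p 0 (w i)) * (if g w then (1 : ℝ) else 0)) ⊆ Set.range (e ∘ ·) := by
    intro w hw
    have hmem : ∀ i, ∃ x, e x = w i := fun i => by
      by_contra hi
      exact left_ne_zero_of_mul hw (prod_eq_zero (mem_univ i) (extend_apply' _ _ _ hi))
    choose x hx using hmem
    exact ⟨x, funext hx⟩
  unfold LP
  rw [← he.comp_left.tsum_eq hsupp]
  simp only [comp_apply, he.extend_apply]

lemma exists_isSymmetric_glue {S : Type*} {W : S → Type*} {e : (Σ s, W s) → V} (he : Injective e)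
    {g : ∀ s, (Fin (k + 1) → W s) → Bool} (hg : ∀ s, IsSymmetric (g s)) :
    ∃ g' : (Fin (k + 1) → V) → Bool, IsSymmetric g' ∧
      ∀ s w, g' (fun i => e ⟨s, w i⟩) = g s w := by
  classical
  refine ⟨fun w => decide (∃ s w', g s w' ∧ (fun i => e ⟨s, w' i⟩) = w),
    isSymmetric_decide ?_, fun s w => ?_⟩
  · rintro σ _ ⟨s, w, hw, rfl⟩
    exact ⟨s, w ∘ σ, (hg s σ w).trans hw, rfl⟩
  · refine Bool.eq_iff_iff.2 (decide_eq_true_iff.trans ⟨?_, fun hw => ⟨s, w, hw, rfl⟩⟩)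
    rintro ⟨s', w', hw', h⟩
    have hsigma : ∀ i, (⟨s', w' i⟩ : Σ s, W s) = ⟨s, w i⟩ := fun i => he (congrFun h i)
    obtain rfl : s' = s := congrArg Sigma.fst (hsigma 0)
    obtain rfl : w' = w := funext fun i => by simpa using hsigma i
    exact hw'

end Extend

section EmpiricalDistribution

variable {V ι : Type*} [Fintype ι] {k : ℕ}

open Classical in
/-- The empirical distribution of a sample `φ`, i.e. the law of `φ a` for uniformly random `a`. -/
noncomputable def empirical (φ : ι → V) : V → ℝ :=
  fun v => 𝔼 a, if φ a = v then 1 else 0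

lemma isDist_empirical [Nonempty ι] (φ : ι → V) : IsDist (empirical φ) := by
  classical
  refine ⟨fun v => expect_nonneg fun a _ => by split_ifs <;> simp, ?_⟩
  have hsum : HasSum (fun v => ∑ a, if φ a = v then (1 : ℝ) else 0) (∑ _a : ι, 1) :=
    hasSum_sum fun a _ => by simpa only [eq_comm] using hasSum_ite_eq (φ a) (1 : ℝ)
  have hcard : (∑ _a : ι, (1 : ℝ)) / Fintype.card ι = 1 := by simp
  unfold empirical
  simpa only [← Fintype.expect_eq_sum_div_card, hcard] using hsum.div_const (Fintype.card ι : ℝ)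

lemma LP_empirical (φ : ι → V) (g : (Fin k → V) → Bool) :
    LP (empirical φ) g = 𝔼 t : Fin k → ι, if g (φ ∘ t) then 1 else 0 := by
  classical
  have hprod (w : Fin k → V) : ∏ i, empirical φ (w i) =
      (∑ t : Fin k → ι, if w = φ ∘ t then (1 : ℝ) else 0) / Fintype.card (Fin k → ι) := by
    simp only [empirical, Fintype.expect_eq_sum_div_card, prod_div_distrib, prod_univ_sum,
      Fintype.piFinset_univ, prod_const, card_univ, Fintype.card_fin, Fintype.card_fun,
      Nat.cast_pow]
    congr! 2 with t
    simp only [prod_boole, mem_univ, true_implies, funext_iff, comp_apply, eq_comm]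
  have hsum : HasSum (fun w => ∑ t : Fin k → ι,
      if w = φ ∘ t then (if g (φ ∘ t) then (1 : ℝ) else 0) else 0)
      (∑ t : Fin k → ι, if g (φ ∘ t) then 1 else 0) :=
    hasSum_sum fun t _ => hasSum_ite_eq _ _
  rw [Fintype.expect_eq_sum_div_card, ← (hsum.div_const _).tsum_eq]
  unfold LP
  congr! 2 with w
  rw [hprod, div_mul_eq_mul_div, sum_mul]
  congr! 2 with t
  split_ifs <;> simp_all

lemma expect_fin_succ (f : (Fin (k + 1) → ι) → ℝ) :
    𝔼 t, f t = 𝔼 a, 𝔼 t : Fin k → ι, f (Fin.cons a t) := by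
  rw [← Fintype.expect_equiv (Fin.consEquiv fun _ => ι) _ f fun _ => rfl, ← univ_product_univ,
    expect_product]
  rfl

lemma LP_empirical_eq_expect_proj (φ : ι → V) (g : (Fin (k + 1) → V) → Bool) :
    LP (empirical φ) g = 𝔼 a, LP (empirical φ) (proj (φ a) g) := by
  rw [LP_empirical, expect_fin_succ]
  simp only [LP_empirical, proj]
  refine expect_congr rfl fun a _ => expect_congr rfl fun t _ => ?_
  exact congrArg (fun b : Bool => if b then (1 : ℝ) else 0) (congrArg g (Fin.comp_cons φ a t))

lemma abs_expect_sub_expect_le {f g : ι → ℝ} [Nonempty ι] {ε : ℝ} (h : ∀ a, |f a - g a| ≤ ε) :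
    |𝔼 a, f a - 𝔼 a, g a| ≤ ε := by
  rw [← expect_sub_distrib]
  exact (abs_expect_le _ _).trans (expect_le univ_nonempty fun a _ => h a)

/- Hybrid argument: exchange one argument of `g` at a time; by symmetry it can be taken to be the
first one. -/
lemma abs_LP_empirical_sub_le [Nonempty ι] {φ ψ : ι → V} {R : Set V} (hφ : ∀ a, φ a ∈ R)
    (hψ : ∀ a, ψ a ∈ R) {ε : ℝ} {g : (Fin (k + 1) → V) → Bool} (hg : IsSymmetric g)
    (h : ∀ u : Fin k → V, (∀ l, u l ∈ R) →
      |𝔼 a, (if g (Fin.cons (φ a) u) then (1 : ℝ) else 0) -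
        𝔼 a, (if g (Fin.cons (ψ a) u) then (1 : ℝ) else 0)| ≤ ε) :
    |LP (empirical φ) g - LP (empirical ψ) g| ≤ (k + 1) * ε := by
  induction k with
  | zero =>
    simp only [LP_empirical_eq_expect_proj (k := 0), LP_empirical, proj]
    simpa [Subsingleton.elim _ (default : Fin 0 → V)] using h default (by simp)
  | succ k ih =>
    let hybrid : ℝ := 𝔼 a, LP (empirical ψ) (proj (φ a) g)
    have htail : |LP (empirical φ) g - hybrid| ≤ (k + 1) * ε := by
      rw [LP_empirical_eq_expect_proj]
      refine abs_expect_sub_expect_le fun a => ih (hg.proj (φ a)) fun u hu => ?_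
      simpa only [proj, hg.cons_cons (φ a)] using
        h (Fin.cons (φ a) u) (Fin.cases (by simpa using hφ a) (by simpa using hu))
    have hhead : |hybrid - LP (empirical ψ) g| ≤ ε := by
      rw [LP_empirical_eq_expect_proj ψ]
      simp only [hybrid, LP_empirical, proj]
      refine (congrArg₂ (|· - ·|) (expect_comm ..) (expect_comm ..)).trans_le ?_
      exact abs_expect_sub_expect_le fun t => h _ fun l => hψ (t l)
    push_cast
    linarith [abs_sub_le (LP (empirical φ) g) hybrid (LP (empirical ψ) g)]

end EmpiricalDistribution

section VCDimension

variable {V W X Y : Type*} {k d : ℕ}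

lemma Shatters.card_le_vcDim {D : Set (X → Bool)} {T : Finset X} (hT : Shatters D T) :
    (#T : ℕ∞) ≤ vcDim D :=
  le_iSup₂_of_le T hT le_rfl

lemma Shatters.injOn {D : Set (X → Bool)} {e : Y → X} {T : Finset Y}
    (hT : Shatters ((· ∘ e) '' D) T) : Set.InjOn e T := by
  classical
  intro x hx x' hx' hxx'
  obtain ⟨_, ⟨g, -, rfl⟩, hg⟩ := hT fun z => decide (z = x)
  have heq : decide (x = x) = decide (x' = x) :=
    (hg x hx).symm.trans ((congrArg g hxx').trans (hg x' hx'))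
  simpa [eq_comm] using heq

lemma vcDim_image_comp_le (D : Set (X → Bool)) (e : Y → X) : vcDim ((· ∘ e) '' D) ≤ vcDim D := by
  classical
  refine iSup₂_le fun T (hT : Shatters _ T) => ?_
  suffices himage : Shatters D (T.image e) by
    simpa only [card_image_of_injOn hT.injOn] using himage.card_le_vcDim
  intro f
  obtain ⟨_, ⟨g, hg, rfl⟩, hgf⟩ := hT (f ∘ e)
  exact ⟨g, hg, forall_mem_image.2 hgf⟩

lemma gvcDim_image_comp_le (G : Set ((Fin k → V) → Bool)) (e : W → V) :
    gvcDim k ((fun g w => g (e ∘ w)) '' G) ≤ gvcDim k G := by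
  induction k with
  | zero => exact vcDim_image_comp_le G _
  | succ k ih =>
    cases k with
    | zero => exact vcDim_image_comp_le G _
    | succ k =>
      refine iSup_le fun w => le_iSup_of_le (e w) ?_
      refine Eq.trans_le (congrArg _ ?_) (ih (proj (e w) '' G))
      simp only [Set.image_image, proj, ← Fin.comp_cons]
      rfl

lemma IsDistinguishingClass.vcDim_image_cons_le {G : Set ((Fin (k + 1) → V) → Bool)}
    (hG : IsDistinguishingClass G) (u : Fin k → V) :
    vcDim ((fun g v => g (Fin.cons v u)) '' G) ≤ gvcDim (k + 1) G := by
  induction k with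
  | zero => exact vcDim_image_comp_le G fun v => Fin.cons v u
  | succ k ih =>
    refine le_iSup_of_le (u 0) ?_
    refine Eq.trans_le (congrArg _ ?_) (ih (hG.image_proj (u 0)) (Fin.tail u))
    rw [Set.image_image]
    refine Set.image_congr fun g hg => funext fun v => ?_
    rw [proj, (hG g hg).cons_cons, Fin.cons_self_tail]

variable [Fintype X]

lemma injective_filter_eq_true : Injective fun c : X → Bool => ({x | c x} : Finset X) :=
  fun c c' h => funext fun x => Bool.eq_iff_iff.2 <| by simpa using congrArg (x ∈ ·) h

lemma vcDim_image_filter_le [DecidableEq X] {D : Finset (X → Bool)}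
    (hD : vcDim (D : Set (X → Bool)) ≤ d) :
    (D.image fun c => ({x | c x} : Finset X)).vcDim ≤ d := by
  refine Finset.sup_le fun T hT => ?_
  suffices hD' : Shatters (D : Set (X → Bool)) T from
    Nat.cast_le.1 (hD'.card_le_vcDim.trans hD)
  intro f
  obtain ⟨_, hA, hT⟩ := mem_shatterer.1 hT (filter_subset (fun x => f x) T)
  obtain ⟨c, hc, rfl⟩ := mem_image.1 hA
  refine ⟨c, hc, fun x hx => Bool.eq_iff_iff.2 ?_⟩
  simpa [hx] using congrArg (x ∈ ·) hT

lemma ncard_le_of_vcDim_le [Nonempty X] {D : Set (X → Bool)} (hD : vcDim D ≤ d) :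
    D.ncard ≤ (d + 1) * Fintype.card X ^ d := by
  classical
  let 𝒜 : Finset (Finset X) := D.toFinset.image fun c => ({x | c x} : Finset X)
  have hvc : 𝒜.vcDim ≤ d := vcDim_image_filter_le (by rwa [Set.coe_toFinset])
  calc D.ncard = #𝒜 := by
        rw [card_image_of_injective _ injective_filter_eq_true, Set.ncard_eq_toFinset_card']
    _ ≤ ∑ i ∈ Iic 𝒜.vcDim, (Fintype.card X).choose i :=
        (card_le_card_shatterer 𝒜).trans card_shatterer_le_sum_vcDim
    _ ≤ ∑ _i ∈ Iic 𝒜.vcDim, Fintype.card X ^ d := by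
        refine sum_le_sum fun i hi => (Nat.choose_le_pow _ _).trans ?_
        exact Nat.pow_le_pow_right Fintype.card_pos ((mem_Iic.1 hi).trans hvc)
    _ ≤ (d + 1) * Fintype.card X ^ d := by
        rw [sum_const, Nat.card_Iic, smul_eq_mul]
        gcongr

end VCDimension

section RandomSigns

variable {J : Type*} [Fintype J] {x : J → ℝ} {ε : ℝ} {d : ℕ}

/-- The discrepancy of `c` with respect to the splitting of `J × Bool` into the two halves
`{(j, s j)}` and `{(j, !s j)}`: the difference of the densities of `c` on them. -/
noncomputable def discrepancy (c : J × Bool → Bool) (s : J → Bool) : ℝ :=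
  𝔼 j, ((if c (j, s j) then 1 else 0) - if c (j, !s j) then 1 else 0)

lemma exists_card_mul_discrepancy_eq (c : J × Bool → Bool) :
    ∃ x : J → ℝ, (∀ j, |x j| ≤ 1) ∧
      ∀ s, Fintype.card J * discrepancy c s = ∑ j, if s j then x j else -x j := by
  refine ⟨fun j => (if c (j, true) then 1 else 0) - if c (j, false) then 1 else 0,
    fun j => by beta_reduce; split_ifs <;> simp, fun s => ?_⟩
  rw [discrepancy, Fintype.card_mul_expect]
  refine sum_congr rfl fun j _ => ?_
  cases s j <;> simp

variable [DecidableEq J]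

open Classical in
/-- The splittings `s` with respect to which some member of `D` has discrepancy larger than `ε`. -/
noncomputable def badSigns (D : Set (J × Bool → Bool)) (ε : ℝ) : Finset (J → Bool) :=
  {s | ∃ c ∈ D, ε < |discrepancy c s|}

lemma sum_exp_mul_sum_signs_le (hx : ∀ j, |x j| ≤ 1) (t : ℝ) :
    ∑ s : J → Bool, Real.exp (t * ∑ j, if s j then x j else -x j) ≤
      (2 * Real.exp (t ^ 2 / 2)) ^ Fintype.card J := by
  have hcosh (j : J) : 2 * Real.cosh (t * x j) ≤ 2 * Real.exp (t ^ 2 / 2) := by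
    have hsq : (t * x j) ^ 2 ≤ t ^ 2 := by
      rw [mul_pow]
      exact mul_le_of_le_one_right (sq_nonneg t) ((sq_le_one_iff_abs_le_one _).2 (hx j))
    have := Real.cosh_le_exp_half_sq (t * x j)
    gcongr
    exact this.trans (by gcongr)
  calc ∑ s : J → Bool, Real.exp (t * ∑ j, if s j then x j else -x j)
      = ∑ s : J → Bool, ∏ j, Real.exp (t * if s j then x j else -x j) := by
        simp only [mul_sum, Real.exp_sum]
    _ = ∏ j, ∑ b : Bool, Real.exp (t * if b then x j else -x j) := by
        rw [prod_univ_sum, Fintype.piFinset_univ]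
    _ = ∏ j, 2 * Real.cosh (t * x j) := by
        refine prod_congr rfl fun j _ => ?_
        simp [Real.cosh_eq, mul_div_cancel₀]
    _ ≤ ∏ _j : J, 2 * Real.exp (t ^ 2 / 2) :=
        prod_le_prod (fun j _ => by positivity) fun j _ => hcosh j
    _ = (2 * Real.exp (t ^ 2 / 2)) ^ Fintype.card J := by rw [prod_const, card_univ]

lemma card_lt_sum_signs_le (hx : ∀ j, |x j| ≤ 1) (hε : 0 ≤ ε) :
    (#{s : J → Bool | ε * Fintype.card J < ∑ j, if s j then x j else -x j} : ℝ) ≤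
      2 ^ Fintype.card J * Real.exp (-(ε ^ 2 / 2 * Fintype.card J)) := by
  set n := Fintype.card J
  set A : Finset (J → Bool) := {s | ε * n < ∑ j, if s j then x j else -x j}
  have hmarkov : #A * Real.exp (ε * (ε * n)) ≤ (2 * Real.exp (ε ^ 2 / 2)) ^ n := by
    refine le_trans ?_ (sum_exp_mul_sum_signs_le hx ε)
    rw [← nsmul_eq_mul]
    refine (card_nsmul_le_sum A _ _ fun s hs => ?_).trans
      (sum_le_univ_sum_of_nonneg fun s => (Real.exp_pos _).le)
    gcongr
    exact (mem_filter.1 hs).2.le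
  rw [← le_div_iff₀ (Real.exp_pos _), mul_pow, ← Real.exp_nat_mul, mul_div_assoc,
    ← Real.exp_sub] at hmarkov
  refine hmarkov.trans_eq ?_
  congr 2
  ring

lemma card_lt_abs_discrepancy_le [Nonempty J] (c : J × Bool → Bool) (hε : 0 ≤ ε) :
    (#{s : J → Bool | ε < |discrepancy c s|} : ℝ) ≤
      2 * (2 ^ Fintype.card J * Real.exp (-(ε ^ 2 / 2 * Fintype.card J))) := by
  obtain ⟨x, hx, hdisc⟩ := exists_card_mul_discrepancy_eq c
  let A (x : J → ℝ) : Finset (J → Bool) :=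
    {s | ε * Fintype.card J < ∑ j, if s j then x j else -x j}
  have hA : ({s | ε < |discrepancy c s|} : Finset (J → Bool)) ⊆ A x ∪ A (-x) := by
    intro s hs
    have hlt : Fintype.card J * ε < |Fintype.card J * discrepancy c s| := by
      rw [abs_mul, Nat.abs_cast]
      exact mul_lt_mul_of_pos_left (mem_filter.1 hs).2 (Nat.cast_pos.2 Fintype.card_pos)
    have hneg : -∑ j, (if s j then x j else -x j) = ∑ j, if s j then (-x) j else -(-x) j := by
      rw [← sum_neg_distrib]
      exact sum_congr rfl fun j _ => by split_ifs <;> rfl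
    rw [hdisc, mul_comm, lt_abs, hneg] at hlt
    simpa only [A, mem_union, mem_filter_univ] using hlt
  calc (#{s : J → Bool | ε < |discrepancy c s|} : ℝ) ≤ #(A x) + #(A (-x)) := by
        exact_mod_cast (card_le_card hA).trans (card_union_le _ _)
    _ ≤ _ := by
        rw [two_mul]
        exact add_le_add (card_lt_sum_signs_le hx hε)
          (card_lt_sum_signs_le (by simpa using hx) hε)

lemma card_badSigns_le [Nonempty J] {D : Set (J × Bool → Bool)} (hD : vcDim D ≤ d) (hε : 0 ≤ ε) :
    (#(badSigns D ε) : ℝ) ≤ (d + 1) * (2 * Fintype.card J) ^ d *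
      (2 * (2 ^ Fintype.card J * Real.exp (-(ε ^ 2 / 2 * Fintype.card J)))) := by
  classical
  set b : ℝ := 2 * (2 ^ Fintype.card J * Real.exp (-(ε ^ 2 / 2 * Fintype.card J)))
  have hsub : badSigns D ε ⊆ D.toFinset.biUnion fun c => {s | ε < |discrepancy c s|} := by
    intro s hs
    simpa [badSigns] using hs
  have hsauer : (#D.toFinset : ℝ) ≤ (d + 1) * (2 * Fintype.card J) ^ d := by
    have := ncard_le_of_vcDim_le hD
    rw [Set.ncard_eq_toFinset_card', Fintype.card_prod, Fintype.card_bool, mul_comm _ 2] at this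
    exact_mod_cast this
  calc (#(badSigns D ε) : ℝ) ≤ ∑ c ∈ D.toFinset, (#{s : J → Bool | ε < |discrepancy c s|} : ℝ) := by
        exact_mod_cast (card_le_card hsub).trans card_biUnion_le
    _ ≤ #D.toFinset * b := by
        rw [← nsmul_eq_mul]
        exact sum_le_card_nsmul _ _ _ fun c _ => card_lt_abs_discrepancy_le c hε
    _ ≤ _ := by gcongr

lemma eventually_mul_card_badSigns_le (d a : ℕ) (C : ℝ) (hC : 0 ≤ C) (hε : 0 < ε) :
    ∀ᶠ n : ℕ in Filter.atTop, ∀ D : Set (Fin n × Bool → Bool), vcDim D ≤ d →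
      C * n ^ a * #(badSigns D ε) ≤ 2 ^ n := by
  have hlim : Filter.Tendsto (fun n : ℕ => (C * (d + 1) * 2 ^ d * 2) *
      ((n : ℝ) ^ (a + d) / Real.exp (ε ^ 2 / 2 * n))) Filter.atTop (nhds 0) := by
    rw [← mul_zero (C * (d + 1) * 2 ^ d * 2)]
    exact ((isLittleO_pow_exp_pos_mul_atTop (a + d) (by positivity : 0 < ε ^ 2 / 2)
      ).tendsto_div_nhds_zero.comp tendsto_natCast_atTop_atTop).const_mul _
  filter_upwards [hlim.eventually (ge_mem_nhds one_pos), Filter.eventually_gt_atTop 0]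
    with n hn hpos D hD
  have : NeZero n := ⟨hpos.ne'⟩
  have hcard := card_badSigns_le hD hε.le
  rw [Fintype.card_fin, Real.exp_neg] at hcard
  calc C * n ^ a * #(badSigns D ε)
      ≤ C * n ^ a * ((d + 1) * (2 * n) ^ d * (2 * (2 ^ n * (Real.exp (ε ^ 2 / 2 * n))⁻¹))) := by
        gcongr
    _ = (C * (d + 1) * 2 ^ d * 2) * (n ^ (a + d) / Real.exp (ε ^ 2 / 2 * n)) * 2 ^ n := by ring
    _ ≤ 2 ^ n := mul_le_of_le_one_left (by positivity) hn

end RandomSigns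

section ChoosingSigns

variable {C I K S : Type*} [Fintype I] [Fintype S]

lemma two_mul_card_biUnion_le [DecidableEq S] {B : I → Finset S}
    (hB : ∀ i, 2 * Fintype.card I * #(B i) ≤ Fintype.card S) :
    2 * #(univ.biUnion B) ≤ Fintype.card S := by
  cases isEmpty_or_nonempty I
  · simp
  refine Nat.le_of_mul_le_mul_left ?_ (Fintype.card_pos (α := I))
  calc Fintype.card I * (2 * #(univ.biUnion B))
      ≤ Fintype.card I * (2 * ∑ i, #(B i)) := by gcongr; exact card_biUnion_le
    _ = ∑ i, 2 * Fintype.card I * #(B i) := by rw [mul_sum, mul_sum]; congr! 1; ring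
    _ ≤ ∑ _i : I, Fintype.card S := sum_le_sum fun i _ => hB i
    _ = Fintype.card I * Fintype.card S := by simp

lemma exists_forall_notMem_of_card_lt [Fintype C] [Fintype K] [Nonempty S] (test : C → I → K)
    (hcard : Fintype.card K * Fintype.card S < Fintype.card C) :
    ∃ σ : C → S, ∀ B : K → Finset S, (∀ y, 2 * Fintype.card I * #(B y) ≤ Fintype.card S) →
      ∃ c, ∀ i, σ c ∉ B (test c i) := by
  classical
  by_contra! hcontra
  let good : Finset (K → Finset S) := {B | ∀ y, 2 * Fintype.card I * #(B y) ≤ Fintype.card S}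
  let hit (B : K → Finset S) (c : C) : Finset S := univ.biUnion fun i => B (test c i)
  have hcover : (univ : Finset (C → S)) ⊆ good.biUnion fun B => Fintype.piFinset (hit B) := by
    intro σ _
    obtain ⟨B, hB, hσ⟩ := hcontra σ
    simpa [good, hit] using ⟨B, hB, hσ⟩
  have hpi : ∀ B ∈ good, 2 ^ Fintype.card C * #(Fintype.piFinset (hit B)) ≤
      Fintype.card S ^ Fintype.card C := by
    intro B hB
    rw [Fintype.card_piFinset, ← card_univ, ← prod_const, ← prod_const, ← prod_mul_distrib]
    exact prod_le_prod' fun c _ => two_mul_card_biUnion_le fun i => (mem_filter.1 hB).2 _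
  have hpow : 2 ^ Fintype.card C * Fintype.card S ^ Fintype.card C ≤
      2 ^ (Fintype.card K * Fintype.card S) * Fintype.card S ^ Fintype.card C :=
    calc 2 ^ Fintype.card C * Fintype.card S ^ Fintype.card C
        = 2 ^ Fintype.card C * #(univ : Finset (C → S)) := by rw [card_univ, Fintype.card_fun]
      _ ≤ ∑ B ∈ good, 2 ^ Fintype.card C * #(Fintype.piFinset (hit B)) := by
          rw [← mul_sum]
          gcongr
          exact (card_le_card hcover).trans card_biUnion_le
      _ ≤ #good * Fintype.card S ^ Fintype.card C := sum_le_card_nsmul _ _ _ hpi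
      _ ≤ _ := by
          gcongr
          refine card_le_univ good |>.trans_eq ?_
          rw [Fintype.card_fun, Fintype.card_finset, ← pow_mul, mul_comm]
  have := Nat.le_of_mul_le_mul_right hpow (pow_pos Fintype.card_pos _)
  exact hcard.not_ge ((Nat.pow_le_pow_iff_right one_lt_two).1 this)

end ChoosingSigns

section ReedSolomon

variable {C ι A R : Type*} [CommRing R] {k : ℕ}

/-- Every word `y c` of the code `y` is determined within the code by its letters in any `k`
distinct positions. -/
def IsSeparating (k : ℕ) (y : C → ι → A) : Prop :=
  ∀ c c' (i : Fin k → ι), Injective i → (∀ l, y c (i l) = y c' (i l)) → c = c'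

/-- The Reed–Solomon codeword of the message `c`: the values at the points `x i` of the polynomial
with coefficients `c`. -/
def reedSolomon (x : ι → R) (c : Fin k → R) (i : ι) : R := ∑ t, c t * x i ^ (t : ℕ)

lemma isSeparating_reedSolomon [IsDomain R] {x : ι → R} (hx : Injective x) :
    IsSeparating k (reedSolomon (k := k) x) := by
  intro c c' i hi h
  refine sub_eq_zero.1 (Matrix.eq_zero_of_forall_index_sum_mul_pow_eq_zero (hx.comp hi) fun l => ?_)
  simpa [reedSolomon, sub_mul, sub_eq_zero] using h l

end ReedSolomon

section WordGraph

variable {ι A J C : Type*} {k : ℕ}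

/-- The vertices lying over the word `y`, when a vertex `(i, a, j, b)` is regarded as lying over the
letter `a` in position `i`. -/
def onWord (y : ι → A) (x : ι × J × Bool) : ι × A × J × Bool := (x.1, y x.1, x.2)

/-- The vertices over the word `y` whose sign agrees with `s` (if `b = false`), respectively
disagrees with `s` (if `b = true`). -/
def half (y : ι → A) (s : J → Bool) (b : Bool) (p : ι × J) : ι × A × J × Bool :=
  onWord y (p.1, p.2, b ^^ s p.2)

open Classical in
/-- The `k`-uniform hypergraph whose edges are, for every `c`, the `k`-tuples over the word `y c`
that have distinct positions and signs agreeing with `σ c`. -/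
noncomputable def wordGraph (y : C → ι → A) (σ : C → J → Bool) (w : Fin k → ι × A × J × Bool) :
    Bool :=
  decide (∃ c t, Injective (Prod.fst ∘ t) ∧ half (y c) (σ c) false ∘ t = w)

lemma isSymmetric_wordGraph (y : C → ι → A) (σ : C → J → Bool) :
    IsSymmetric (wordGraph (k := k) y σ) := by
  refine isSymmetric_decide ?_
  rintro π _ ⟨c, t, ht, rfl⟩
  exact ⟨c, t ∘ π, ht.comp π.injective, rfl⟩

lemma wordGraph_half_false (y : C → ι → A) (σ : C → J → Bool) (c : C) {t : Fin k → ι × J}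
    (ht : Injective (Prod.fst ∘ t)) : wordGraph y σ (half (y c) (σ c) false ∘ t) = true := by
  classical
  exact decide_eq_true ⟨c, t, ht, rfl⟩

lemma wordGraph_half_true [NeZero k] {y : C → ι → A} (σ : C → J → Bool)
    (hy : IsSeparating k y) (c : C) (t : Fin k → ι × J) :
    wordGraph y σ (half (y c) (σ c) true ∘ t) = false := by
  classical
  refine decide_eq_false ?_
  rintro ⟨c', t', ht', heq⟩
  have hcoord (l : Fin k) : (t' l).1 = (t l).1 ∧ y c' (t' l).1 = y c (t l).1 ∧
      (t' l).2 = (t l).2 ∧ (false ^^ σ c' (t' l).2) = (true ^^ σ c (t l).2) := by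
    simpa only [comp_apply, half, onWord, Prod.mk.injEq] using congrFun heq l
  obtain rfl : c' = c := hy c' c _ ht' fun l => (hcoord l).2.1.trans (by simp [(hcoord l).1])
  obtain ⟨-, -, hj, hsign⟩ := hcoord 0
  simp [hj] at hsign

open Classical in
lemma expect_injective_fst [Fintype ι] [Fintype J] [Nonempty J] :
    (𝔼 t : Fin k → ι × J, if Injective (Prod.fst ∘ t) then (1 : ℝ) else 0) =
      (Fintype.card ι).descFactorial k / Fintype.card ι ^ k := by
  have hcard : #{i : Fin k → ι | Injective i} = (Fintype.card ι).descFactorial k := by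
    rw [← Fintype.card_subtype, Fintype.card_congr (Equiv.subtypeInjectiveEquivEmbedding _ _),
      Fintype.card_embedding_eq, Fintype.card_fin]
  calc (𝔼 t : Fin k → ι × J, if Injective (Prod.fst ∘ t) then (1 : ℝ) else 0)
      = 𝔼 p : (Fin k → ι) × (Fin k → J), if Injective p.1 then (1 : ℝ) else 0 :=
        Fintype.expect_equiv (Equiv.arrowProdEquivProdArrow ..) _ _ fun t => rfl
    _ = 𝔼 i : Fin k → ι, if Injective i then (1 : ℝ) else 0 := by
        rw [← univ_product_univ, expect_product]
        exact expect_congr rfl fun i _ =>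
          Fintype.expect_const (if Injective i then (1 : ℝ) else 0)
    _ = _ := by
        rw [Fintype.expect_eq_sum_div_card, sum_boole, hcard]
        simp

lemma tendsto_descFactorial_div_pow (k : ℕ) :
    Filter.Tendsto (fun r : ℕ => (r.descFactorial k : ℝ) / r ^ k) Filter.atTop (nhds 1) := by
  refine (Asymptotics.isEquivalent_iff_tendsto_one ?_).1 (isEquivalent_descFactorial k)
  filter_upwards [Filter.eventually_ne_atTop 0] with r hr
  positivity

lemma LP_empirical_half_false_ge [Fintype ι] [Fintype J] [Nonempty J] (y : C → ι → A)
    (σ : C → J → Bool) (c : C) :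
    (Fintype.card ι).descFactorial k / (Fintype.card ι : ℝ) ^ k ≤
      LP (empirical (half (y c) (σ c) false)) (wordGraph (k := k) y σ) := by
  classical
  rw [LP_empirical, ← expect_injective_fst (J := J)]
  refine expect_le_expect fun t _ => ?_
  split_ifs with ht hw <;> simp_all [wordGraph_half_false]

lemma LP_empirical_half_true [NeZero k] [Fintype ι] [Fintype J] {y : C → ι → A}
    (σ : C → J → Bool) (hy : IsSeparating k y) (c : C) :
    LP (empirical (half (y c) (σ c) true)) (wordGraph (k := k) y σ) = 0 := by
  simp [LP_empirical, wordGraph_half_true σ hy]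

lemma abs_LP_empirical_half_sub_le [Fintype ι] [Fintype J] [Nonempty ι] [Nonempty J] {y : ι → A}
    {s : J → Bool} {ε : ℝ} {h : (Fin (k + 1) → ι × A × J × Bool) → Bool} (hh : IsSymmetric h)
    (hdisc : ∀ (u : Fin k → ι × J × Bool) (i : ι),
      |discrepancy (fun z => h (Fin.cons (i, y i, z) (onWord y ∘ u))) s| ≤ ε) :
    |LP (empirical (half y s false)) h - LP (empirical (half y s true)) h| ≤ (k + 1) * ε := by
  have hrange (b : Bool) (p : ι × J) : half y s b p ∈ Set.range (onWord y) := ⟨_, rfl⟩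
  refine abs_LP_empirical_sub_le (hrange false) (hrange true) hh fun u hu => ?_
  choose u' hu' using hu
  obtain rfl : onWord y ∘ u' = u := funext hu'
  simp only [← univ_product_univ, expect_product, half, onWord, Bool.false_xor, Bool.true_xor]
  refine abs_expect_sub_expect_le fun i => ?_
  rw [← expect_sub_distrib]
  exact hdisc u' i

end WordGraph

section FixedScale

variable {V W : Type*} {k d m n : ℕ} {ε : ℝ}

/-- `g` outperforms the distinguishing classes of graph VC dimension at most `d`, with accuracy `ε`:
for each such class there are two distributions which it separates by at most `ε` and `g` by at
least `1 - ε`. -/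
def Outperforms (g : (Fin (k + 1) → V) → Bool) (d : ℕ) (ε : ℝ) : Prop :=
  ∀ G : Set ((Fin k → V) → Bool), IsDistinguishingClass G → gvcDim k G ≤ d →
    ∃ p₁ p₂ : V → ℝ, IsDist p₁ ∧ IsDist p₂ ∧ (∀ h ∈ G, |LP p₁ h - LP p₂ h| ≤ ε) ∧
      1 - ε ≤ LP p₁ g - LP p₂ g

lemma Outperforms.mono {g : (Fin (k + 1) → V) → Bool} {δ : ℝ} (hg : Outperforms g d δ)
    (hδ : δ ≤ ε) : Outperforms g d ε := by
  intro G hG hd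
  obtain ⟨p₁, p₂, hp₁, hp₂, hle, hge⟩ := hg G hG hd
  exact ⟨p₁, p₂, hp₁, hp₂, fun h hh => (hle h hh).trans hδ, by linarith⟩

lemma Outperforms.of_comp {e : W → V} (he : Injective e) {g : (Fin (k + 1) → V) → Bool}
    (hg : Outperforms (fun w => g (e ∘ w)) d ε) : Outperforms g d ε := by
  intro G hG hd
  have hG' : IsDistinguishingClass ((fun h (w : Fin k → W) => h (e ∘ w)) '' G) := by
    rintro _ ⟨h, hh, rfl⟩ σ w
    exact hG h hh σ (e ∘ w)
  obtain ⟨p₁, p₂, hp₁, hp₂, hle, hge⟩ := hg _ hG' ((gvcDim_image_comp_le G e).trans hd)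
  refine ⟨_, _, hp₁.extend he, hp₂.extend he, fun h hh => ?_, ?_⟩
  · simpa only [LP_extend he] using hle _ ⟨h, hh, rfl⟩
  · simpa only [LP_extend he] using hge

lemma exists_signs_halves_indistinguishable {C ι A : Type*} [Fintype C] [Fintype ι] [Fintype A]
    [Nonempty ι] [NeZero n] (y : C → ι → A)
    (hbad : ∀ D : Set (Fin n × Bool → Bool), vcDim D ≤ d →
      2 * Fintype.card ((Fin m → ι × Fin n × Bool) × ι) * #(badSigns D ε) ≤ 2 ^ n)
    (hcard : Fintype.card ((Fin m → ι × A × Fin n × Bool) × ι × A) * 2 ^ n < Fintype.card C) :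
    ∃ σ : C → Fin n → Bool, ∀ G : Set ((Fin (m + 1) → ι × A × Fin n × Bool) → Bool),
      IsDistinguishingClass G → gvcDim (m + 1) G ≤ d →
      ∃ c, ∀ h ∈ G, |LP (empirical (half (y c) (σ c) false)) h -
        LP (empirical (half (y c) (σ c) true)) h| ≤ (m + 1) * ε := by
  classical
  have hsigns : Fintype.card (Fin n → Bool) = 2 ^ n := by simp
  let test (c : C) (i : (Fin m → ι × Fin n × Bool) × ι) :
      (Fin m → ι × A × Fin n × Bool) × ι × A := (onWord (y c) ∘ i.1, i.2, y c i.2)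
  rw [← hsigns] at hcard
  obtain ⟨σ, hσ⟩ := exists_forall_notMem_of_card_lt test hcard
  refine ⟨σ, fun G hG hd => ?_⟩
  let slice (u : Fin m → ι × A × Fin n × Bool) (i : ι) (a : A)
      (h : (Fin (m + 1) → ι × A × Fin n × Bool) → Bool) (z : Fin n × Bool) : Bool :=
    h (Fin.cons (i, a, z) u)
  have hslice (u i a) : vcDim (slice u i a '' G) ≤ d := by
    have himage : slice u i a '' G =
        (· ∘ fun z => (i, a, z)) '' ((fun h v => h (Fin.cons v u)) '' G) := by
      rw [Set.image_image]
      rfl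
    exact himage ▸ (vcDim_image_comp_le ..).trans ((hG.vcDim_image_cons_le u).trans hd)
  obtain ⟨c, hc⟩ := hσ (fun t => badSigns (slice t.1 t.2.1 t.2.2 '' G) ε) fun t => by
    rw [hsigns]
    exact hbad _ (hslice ..)
  refine ⟨c, fun h hh => abs_LP_empirical_half_sub_le (hG h hh) fun u i => ?_⟩
  by_contra! hlt
  exact hc (u, i) <| (mem_filter_univ _).2 ⟨_, ⟨h, hh, rfl⟩, hlt⟩

lemma exists_outperforms_wordGraph {C ι A : Type*} [Fintype C] [Fintype ι] [Fintype A] [Nonempty ι]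
    [NeZero n] {y : C → ι → A} (hy : IsSeparating (m + 2) y)
    (hfrac : 1 - ε ≤ (Fintype.card ι).descFactorial (m + 2) / (Fintype.card ι : ℝ) ^ (m + 2))
    (hbad : ∀ D : Set (Fin n × Bool → Bool), vcDim D ≤ d →
      2 * Fintype.card ((Fin m → ι × Fin n × Bool) × ι) * #(badSigns D (ε / (m + 1))) ≤ 2 ^ n)
    (hcard : Fintype.card ((Fin m → ι × A × Fin n × Bool) × ι × A) * 2 ^ n < Fintype.card C) :
    ∃ σ : C → Fin n → Bool, Outperforms (wordGraph (k := m + 2) y σ) d ε := by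
  obtain ⟨σ, hσ⟩ := exists_signs_halves_indistinguishable y hbad hcard
  refine ⟨σ, fun G hG hd => ?_⟩
  obtain ⟨c, hc⟩ := hσ G hG hd
  refine ⟨_, _, isDist_empirical (half (y c) (σ c) false),
    isDist_empirical (half (y c) (σ c) true), fun h hh => ?_, ?_⟩
  · exact (hc h hh).trans_eq (mul_div_cancel₀ _ (by positivity))
  · rw [LP_empirical_half_true σ hy, sub_zero]
    exact hfrac.trans (LP_empirical_half_false_ge y σ c)

lemma exists_outperforms (m d : ℕ) (hε : 0 < ε) :
    ∃ (W : Type) (_ : Countable W) (g : (Fin (m + 2) → W) → Bool),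
      IsSymmetric g ∧ Outperforms g d ε := by
  obtain ⟨r, hr, hr0⟩ := (((tendsto_descFactorial_div_pow (m + 2)).eventually
    (le_mem_nhds (sub_lt_self 1 hε))).and (Filter.eventually_gt_atTop 0)).exists
  obtain ⟨n, hn, hn0⟩ := ((eventually_mul_card_badSigns_le d m (2 * ((2 * r) ^ m * r))
    (by positivity) (div_pos hε (by positivity : (0 : ℝ) < m + 1))).and
    (Filter.eventually_gt_atTop 0)).exists
  obtain ⟨q, hqlt, hq⟩ := Nat.exists_infinite_primes ((r * (n * 2)) ^ m * r * 2 ^ n + r + 1)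
  have : Fact q.Prime := ⟨hq⟩
  have : NeZero r := ⟨hr0.ne'⟩
  have : NeZero n := ⟨hn0.ne'⟩
  obtain ⟨x⟩ : Nonempty (Fin r ↪ ZMod q) :=
    Function.Embedding.nonempty_of_card_le (by simp only [Fintype.card_fin, ZMod.card]; omega)
  have hbad (D : Set (Fin n × Bool → Bool)) (hD : vcDim D ≤ d) :
      2 * Fintype.card ((Fin m → Fin r × Fin n × Bool) × Fin r) *
        #(badSigns D (ε / (m + 1))) ≤ 2 ^ n := by
    rw [← Nat.cast_le (α := ℝ)]
    push_cast [Fintype.card_prod, Fintype.card_fun, Fintype.card_fin, Fintype.card_bool]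
    refine (hn D hD).trans_eq' ?_
    ring
  have hcard : Fintype.card ((Fin m → Fin r × ZMod q × Fin n × Bool) × Fin r × ZMod q) * 2 ^ n <
      Fintype.card (Fin (m + 2) → ZMod q) := by
    simp only [Fintype.card_prod, Fintype.card_fun, Fintype.card_fin, Fintype.card_bool, ZMod.card]
    calc (r * (q * (n * 2))) ^ m * (r * q) * 2 ^ n
        = ((r * (n * 2)) ^ m * r * 2 ^ n) * q ^ (m + 1) := by ring
      _ < q * q ^ (m + 1) := by
          gcongr
          · exact pow_pos hq.pos _
          · omega
      _ = q ^ (m + 2) := by ring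
  obtain ⟨σ, hσ⟩ := exists_outperforms_wordGraph (isSeparating_reedSolomon x.injective)
    (by simpa using hr) hbad hcard
  exact ⟨_, inferInstance, _, isSymmetric_wordGraph (reedSolomon x) σ, hσ⟩

end FixedScale

lemma exists_forall_outperforms (V : Type*) [Infinite V] (m : ℕ) :
    ∃ g : (Fin (m + 2) → V) → Bool, IsSymmetric g ∧
      ∀ (d : ℕ) (ε : ℝ), 0 < ε → Outperforms g d ε := by
  choose W hW g hsymm hout using fun s : ℕ × ℕ =>
    exists_outperforms m s.1 (Nat.one_div_pos_of_nat (α := ℝ) (n := s.2))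
  obtain ⟨f, hf⟩ := exists_injective_nat (Σ s, W s)
  have he : Injective (Infinite.natEmbedding V ∘ f) := (Infinite.natEmbedding V).injective.comp hf
  obtain ⟨g', hg', hglue⟩ := exists_isSymmetric_glue he hsymm
  refine ⟨g', hg', fun d ε hε => ?_⟩
  obtain ⟨N, hN⟩ := exists_nat_one_div_lt hε
  have hcomp : Outperforms g' d (1 / (N + 1)) := by
    refine Outperforms.of_comp (he.comp (sigma_mk_injective (i := (d, N)))) ?_
    convert hout (d, N) with w
    exact hglue (d, N) w
  exact hcomp.mono hN.le

theorem stmt11_general {V : Type*} [Infinite V] (k : ℕ) (hk : 2 ≤ k) :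
    ∃ g : (Fin k → V) → Bool, IsSymmetric g ∧
      ∀ G : Set ((Fin (k - 1) → V) → Bool), IsDistinguishingClass G → gvcDim (k - 1) G ≠ ⊤ →
        ∀ ε : ℝ, 0 < ε → ∀ γ : ℝ, γ < 1 → ∃ p₁ p₂ : V → ℝ, IsDist p₁ ∧ IsDist p₂ ∧
          IPM G p₁ p₂ < ε ∧ γ < |LP p₁ g - LP p₂ g| := by
  obtain ⟨m, rfl⟩ := Nat.exists_eq_add_of_le' hk
  obtain ⟨g, hsymm, hg⟩ := exists_forall_outperforms V m
  refine ⟨g, hsymm, fun G hG hfin ε hε γ hγ => ?_⟩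
  obtain ⟨δ, hδ, hδmin⟩ := exists_between (lt_min hε (sub_pos.2 hγ))
  obtain ⟨d, hd⟩ := ENat.ne_top_iff_exists.1 hfin
  obtain ⟨p₁, p₂, hp₁, hp₂, hle, hge⟩ := hg d δ hδ G hG hd.ge
  refine ⟨p₁, p₂, hp₁, hp₂, ?_, ?_⟩
  · have hIPM : IPM G p₁ p₂ ≤ δ :=
      Real.iSup_le (fun h => Real.iSup_le (hle h) hδ.le) hδ.le
    exact hIPM.trans_lt (hδmin.trans_le (min_le_left ..))
  · have : δ < 1 - γ := hδmin.trans_le (min_le_right ..)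
    exact (by linarith : γ < LP p₁ g - LP p₂ g).trans_le (le_abs_self _)

/-- a single `k`-distinguisher beats every finite-gVC
`(k−1)`-distinguishing class (Theorem `main_expressivek`). -/
theorem stmt11 (k : ℕ) (hk : 2 ≤ k) :
    ∃ g : (Fin k → ℕ) → Bool, IsSymmetric g ∧
      ∀ G : Set ((Fin (k - 1) → ℕ) → Bool), IsDistinguishingClass G →
        gvcDim (k - 1) G ≠ ⊤ →
        ∀ ε : ℝ, 0 < ε →
          ∃ p₁ p₂ : ℕ → ℝ, IsDist p₁ ∧ IsDist p₂ ∧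
            IPM G p₁ p₂ < ε ∧ |LP p₁ g - LP p₂ g| > 1 / 4 := by
  obtain ⟨g, hg, h⟩ := stmt11_general (V := ℕ) k hk
  exact ⟨g, hg, fun G hG hfin ε hε => h G hG hfin ε hε (1 / 4) (by norm_num)⟩

end GraphDisc
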